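/- arXiv:math/9909172 — 4 statements merged into one kernel-verified Lean document; each statement's English description precedes it below -/
import Mathlib

section
/- Let P ∈ K³₀ be a polytope and for 1 ≤ j ≤ 6 let H_{i_j} = {x ∈ ℝ³ : ⟨a^{i_j}, x⟩ = b_{i_j}} (with a^{i_j} ∈ ℝ³ and b_{i_j} > 0) be the affine hull of a facet of P. Let A ∈ ℝ^{6×9} be the matrix whose rows are (a^{i₁}, 0, 0), (0, a^{i₂}, 0), (0, 0, a^{i₃}), (0, a^{i₄}, −a^{i₄}), (−a^{i₅}, 0, a^{i₅}), (a^{i₆}, −a^{i₆}, 0), and let S = {W = (w¹, w², w³) ∈ ℝ^{3×3} : ⟨a^{i₁}, w¹⟩ = b_{i₁}, ⟨a^{i₂}, w²⟩ = b_{i₂}, ⟨a^{i₃}, w³⟩ = b_{i₃}, ⟨a^{i₄}, w² − w³⟩ = b_{i₄}, ⟨a^{i₅}, w³ − w¹⟩ = b_{i₅}, ⟨a^{i₆}, w¹ − w²⟩ = b_{i₆}}. If rank(A) < 6, then the function f(W) = |det(W)| has no local minimum W (relative to S) with f(W) > 0. -/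
/-!
Suppose `det W ≠ 0`. Directions `V` in the kernel of `A` keep `W + t V` in `S`, and writing
`V = M W` gives `det (W + t V) = det (1 + t M) det W`, where
`det (1 + t M) = 1 + t tr M + t² e₂(M) + t³ det M`.

Since `rank A < 6`, the kernel of `A` has dimension at least `4`, whereas symmetry of
`M = V W⁻¹` amounts to three linear conditions on `V`; hence some nonzero `V` in the kernel yields
a symmetric `M ≠ 0` (`exists_symm_direction`). Local minimality of `|det|` makes the cubic above
locally minimal at `t = 0`, which forces `tr M = 0` and `e₂(M) ≥ 0` (`cubic_localMin`). But
`2 e₂(M) = (tr M)² - tr (M²)`, and for symmetric `M` the trace of `M²` is the sum of the squares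
of the entries, so `M = 0`, a contradiction.
-/

open Matrix

/-- Coefficient pattern of the six linear conditions defining `S`. -/
def coefPat : Fin 6 → Fin 3 → ℝ :=
  ![![1,0,0], ![0,1,0], ![0,0,1], ![0,1,-1], ![-1,0,1], ![1,-1,0]]

/-- First- and second-order conditions for a cubic to be locally minimal at `0`. -/
lemma cubic_localMin (T E D : ℝ)
    (h : ∀ᶠ t in nhds (0 : ℝ), 1 ≤ 1 + t * T + t ^ 2 * E + t ^ 3 * D) : T = 0 ∧ 0 ≤ E := by
  have hT : T = 0 := by
    have hmin : IsLocalMin (fun t : ℝ => 1 + t * T + t ^ 2 * E + t ^ 3 * D) 0 := by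
      filter_upwards [h] with t ht
      simpa using ht
    have hd : HasDerivAt (fun t : ℝ => 1 + t * T + t ^ 2 * E + t ^ 3 * D) T 0 := by
      have h1 := ((((hasDerivAt_id (0 : ℝ)).mul_const T).const_add 1).add
        ((hasDerivAt_pow 2 (0 : ℝ)).mul_const E)).add ((hasDerivAt_pow 3 (0 : ℝ)).mul_const D)
      exact h1.congr_deriv (by simp)
    exact hmin.hasDerivAt_eq_zero hd
  refine ⟨hT, ?_⟩
  subst hT
  have hneg : ∀ᶠ t in nhds (0 : ℝ), 1 ≤ 1 + (-t) * 0 + (-t) ^ 2 * E + (-t) ^ 3 * D := by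
    have hc : Filter.Tendsto (fun t : ℝ => -t) (nhds 0) (nhds 0) := by
      simpa using (continuous_neg (G := ℝ)).tendsto 0
    exact hc.eventually h
  obtain ⟨ε, hε, hball⟩ := Metric.eventually_nhds_iff.1 (h.and hneg)
  obtain ⟨h1, h2⟩ := hball (y := ε / 2) (by
    rw [Real.dist_eq, sub_zero, abs_of_pos (by positivity)]; linarith)
  -- The cubic terms at `ε / 2` and `-ε / 2` cancel in the sum.
  have h3 : 0 ≤ (ε / 2) ^ 2 * E := by nlinarith
  exact nonneg_of_mul_nonneg_right h3 (by positivity)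

/-- The expansion of `det (1 + t M)` for a symmetric `3 × 3` matrix `M`, with the quadratic
coefficient written as half of `(tr M)²` minus the sum of the squares of the entries. -/
lemma det_one_add_smul_symm (M : Matrix (Fin 3) (Fin 3) ℝ) (hM : M.IsSymm) (t : ℝ) :
    (1 + t • M).det = 1 + t * M.trace
      + t ^ 2 * ((M.trace ^ 2 - ∑ i, ∑ j, M i j ^ 2) / 2) + t ^ 3 * M.det := by
  have h01 := hM.apply 0 1
  have h02 := hM.apply 0 2
  have h12 := hM.apply 1 2
  simp only [Matrix.det_fin_three, Matrix.trace, Matrix.diag, Fin.sum_univ_three, Matrix.add_apply,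
    Matrix.smul_apply, Matrix.one_apply, smul_eq_mul, h01, h02, h12]
  simp
  ring

/-- If `A` has rank less than `6`, its kernel (of dimension at least `4`) contains a nonzero `V`
for which `V * B` is symmetric, because symmetry imposes only three linear conditions. -/
lemma exists_symm_direction (A : Matrix (Fin 6) (Fin 3 × Fin 3) ℝ) (hrank : A.rank < 6)
    (B : Matrix (Fin 3) (Fin 3) ℝ) :
    ∃ V : Matrix (Fin 3) (Fin 3) ℝ, V ≠ 0 ∧ A.mulVec (fun p => V p.1 p.2) = 0 ∧
      (V * B).IsSymm := by
  -- The three entries above the diagonal of `V B - (V B)ᵀ`, as a linear map.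
  let φ : (Fin 3 × Fin 3 → ℝ) →ₗ[ℝ] (Fin 3 → ℝ) :=
    { toFun := fun v =>
        ![((Matrix.of fun i j => v (i, j)) * B) 0 1 - ((Matrix.of fun i j => v (i, j)) * B) 1 0,
          ((Matrix.of fun i j => v (i, j)) * B) 0 2 - ((Matrix.of fun i j => v (i, j)) * B) 2 0,
          ((Matrix.of fun i j => v (i, j)) * B) 1 2 - ((Matrix.of fun i j => v (i, j)) * B) 2 1]
      map_add' := by
        intro x y
        ext i
        fin_cases i <;> simp [Matrix.mul_apply, Fin.sum_univ_three] <;> ring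
      map_smul' := by
        intro c x
        ext i
        fin_cases i <;> simp [Matrix.mul_apply, Fin.sum_univ_three] <;> ring }
  have hdim : Module.finrank ℝ (Fin 3 → ℝ) < Module.finrank ℝ (LinearMap.ker A.mulVecLin) := by
    have h1 := LinearMap.finrank_range_add_finrank_ker A.mulVecLin
    have h2 : Module.finrank ℝ (LinearMap.range A.mulVecLin) < 6 := hrank
    simp at h1 ⊢
    omega
  obtain ⟨⟨v, hv⟩, hφ, hne⟩ := (Submodule.ne_bot_iff _).1
    (LinearMap.ker_ne_bot_of_finrank_lt (f := φ.domRestrict (LinearMap.ker A.mulVecLin)) hdim)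
  have hφ' : φ v = 0 := hφ
  have e0 := sub_eq_zero.1 (congrFun hφ' 0)
  have e1 := sub_eq_zero.1 (congrFun hφ' 1)
  have e2 := sub_eq_zero.1 (congrFun hφ' 2)
  refine ⟨Matrix.of fun i j => v (i, j), ?_, hv, ?_⟩
  · intro h0
    apply hne
    ext ⟨i, j⟩
    exact congrFun (congrFun h0 i) j
  · refine Matrix.IsSymm.ext fun i j => ?_
    fin_cases i <;> fin_cases j <;>
      first | rfl | exact e0 | exact e1 | exact e2 | exact e0.symm | exact e1.symm | exact e2.symm

/-- Lemma 4.1 of Betke–Henk: if the rank of the `6 × 9` coefficient matrix `A` is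
less than `6`, the function `W ↦ |det W|` has no local minimum on `S` with positive
value. -/
theorem stmt_7 (P : Set (Fin 3 → ℝ))
    (hPconv : Convex ℝ P) (hPcomp : IsCompact P) (hPint : (interior P).Nonempty)
    (hPsym : ∀ x ∈ P, -x ∈ P)
    (hPpoly : ∃ s : Finset ((Fin 3 → ℝ) × ℝ), P = {x | ∀ q ∈ s, q.1 ⬝ᵥ x ≤ q.2})
    (a : Fin 6 → Fin 3 → ℝ) (b : Fin 6 → ℝ) (hb : ∀ r, 0 < b r)
    -- each `H_{i_j} = {x : ⟨a r, x⟩ = b r}` is the affine hull of a facet of `P`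
    (hsupp : ∀ r, ∀ x ∈ P, a r ⬝ᵥ x ≤ b r)
    (hfacet : ∀ r, Module.finrank ℝ
      (affineSpan ℝ (P ∩ {x | a r ⬝ᵥ x = b r})).direction = 2)
    (A : Matrix (Fin 6) (Fin 3 × Fin 3) ℝ)
    (hA : A = Matrix.of fun r jk => coefPat r jk.1 * a r jk.2)
    (hrank : A.rank < 6)
    (S : Set (Fin 3 → Fin 3 → ℝ))
    (hS : S = {W | ∀ r, a r ⬝ᵥ (∑ j, coefPat r j • W j) = b r}) :
    ∀ W ∈ S, IsLocalMinOn (fun W : Fin 3 → Fin 3 → ℝ => |(Matrix.of W).det|) S W →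
      (Matrix.of W).det = 0 := by
  intro W hW hmin
  by_contra hdet
  have hunit : IsUnit (Matrix.of W).det := isUnit_iff_ne_zero.2 hdet
  obtain ⟨V, hV0, hVker, hsymm⟩ := exists_symm_direction A hrank (Matrix.of W)⁻¹
  set M := V * (Matrix.of W)⁻¹ with hMdef
  have hMW : M * Matrix.of W = V := by
    rw [hMdef, Matrix.mul_assoc, Matrix.nonsing_inv_mul _ hunit, Matrix.mul_one]
  have hline : ∀ t : ℝ, W + t • Matrix.of.symm V ∈ S := by
    intro t
    rw [hS] at hW ⊢
    intro r
    have h1 := hW r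
    have h2 := congrFun hVker r
    simp only [hA, Matrix.mulVec, dotProduct, Fintype.sum_prod_type, Fin.sum_univ_three,
      Matrix.of_apply, Matrix.of_symm_apply, Pi.zero_apply, Pi.add_apply, Pi.smul_apply, smul_eq_mul] at h1 h2 ⊢
    linear_combination h1 + t * h2
  have hfac : ∀ t : ℝ, (Matrix.of (W + t • Matrix.of.symm V)).det
      = (1 + t • M).det * (Matrix.of W).det := by
    intro t
    rw [← Matrix.det_mul, Matrix.add_mul, Matrix.one_mul, Matrix.smul_mul, hMW]
    rfl
  have htend : Filter.Tendsto (fun t : ℝ => W + t • Matrix.of.symm V) (nhds 0)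
      (nhdsWithin W S) := by
    refine tendsto_nhdsWithin_iff.2 ⟨?_, Filter.Eventually.of_forall hline⟩
    have hc : Continuous fun t : ℝ => W + t • Matrix.of.symm V := by fun_prop
    simpa using hc.tendsto 0
  have hpos : ∀ᶠ t in nhds (0 : ℝ), 0 < (1 + t • M).det := by
    have hc : Continuous fun t : ℝ => (1 + t • M).det := by
      simp only [det_one_add_smul_symm M hsymm]
      fun_prop
    exact hc.continuousAt.eventually (lt_mem_nhds (by simp))
  have hge : ∀ᶠ t in nhds (0 : ℝ), 1 ≤ (1 + t • M).det := by
    filter_upwards [htend.eventually hmin, hpos] with t ht hp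
    simp only [hfac, abs_mul, abs_of_pos hp] at ht
    exact (le_mul_iff_one_le_left (abs_pos.2 hdet)).1 ht
  simp only [det_one_add_smul_symm M hsymm] at hge
  obtain ⟨hT, hE⟩ := cubic_localMin _ _ _ hge
  rw [hT] at hE
  have hsum : ∑ i, ∑ j, M i j ^ 2 ≤ 0 := by linarith
  have hM0 : M = 0 := by
    ext i j
    have h1 : M i j ^ 2 ≤ ∑ j, M i j ^ 2 :=
      Finset.single_le_sum (f := fun j => M i j ^ 2) (fun _ _ => sq_nonneg _) (Finset.mem_univ j)
    have h2 : ∑ j, M i j ^ 2 ≤ ∑ i, ∑ j, M i j ^ 2 :=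
      Finset.single_le_sum (f := fun i => ∑ j, M i j ^ 2)
        (fun _ _ => Finset.sum_nonneg fun _ _ => sq_nonneg _) (Finset.mem_univ i)
    exact pow_eq_zero_iff (two_ne_zero) |>.1 (le_antisymm (by linarith) (sq_nonneg _))
  exact hV0 (by rw [← hMW, hM0, Matrix.zero_mul])
end

section
/- Let w¹, w², w³ ∈ ℝ³ be linearly independent and let v¹, v², v³ ∈ ℝ³ be nonzero vectors. Then the seven determinants det(v¹, w², w³), det(w¹, v², w³), det(w¹, w², v³), det(v¹, v², w³), det(w¹, v², v³), det(v¹, w², v³) and det(v¹, v², v³) cannot all vanish. -/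
/-!
Expand `v_j = ∑ i, A i j • w_i` in the basis `w₁, w₂, w₃`. The seven determinants are the principal
minors of `A` times `det (w₁, w₂, w₃) ≠ 0`. If they all vanish, the `1 × 1` minors give zero
diagonal, the `2 × 2` minors then give `A i j * A j i = 0` for `i ≠ j`, and the `3 × 3` minor kills
the two 3-cycle products. So the directed graph of nonzero entries of `A` is acyclic; but since no
column of `A` vanishes, every vertex has an incoming edge, which forces a cycle.
-/

/-- The determinant of the `3×3` matrix with columns `u, v, w`. -/
noncomputable def det3 (u v w : Fin 3 → ℝ) : ℝ :=
  ((Matrix.of ![u, v, w]).transpose).det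

lemma det3_eq (u v w : Fin 3 → ℝ) :
    det3 u v w = u 0 * (v 1 * w 2 - v 2 * w 1) - u 1 * (v 0 * w 2 - v 2 * w 0)
      + u 2 * (v 0 * w 1 - v 1 * w 0) := by
  simp [det3, Matrix.det_fin_three]
  ring

lemma det3_ne_zero {w₁ w₂ w₃ : Fin 3 → ℝ} (hw : LinearIndependent ℝ ![w₁, w₂, w₃]) :
    det3 w₁ w₂ w₃ ≠ 0 := by
  have h : IsUnit (Matrix.of ![w₁, w₂, w₃]) :=
    Matrix.linearIndependent_rows_iff_isUnit.mp hw
  rw [det3, Matrix.det_transpose]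
  exact ((Matrix.isUnit_iff_isUnit_det _).mp h).ne_zero

lemma exists_coeffs {w₁ w₂ w₃ : Fin 3 → ℝ} (hw : LinearIndependent ℝ ![w₁, w₂, w₃])
    (v : Fin 3 → ℝ) : ∃ a b c : ℝ, v = a • w₁ + b • w₂ + c • w₃ := by
  have hv : v ∈ Submodule.span ℝ (Set.range ![w₁, w₂, w₃]) := by
    rw [hw.span_eq_top_of_card_eq_finrank' (by simp)]
    trivial
  obtain ⟨c, hc⟩ := (Submodule.mem_span_range_iff_exists_fun ℝ).mp hv
  exact ⟨c 0, c 1, c 2, by simpa [Fin.sum_univ_three] using hc.symm⟩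

/-- A `3 × 3` matrix with zero diagonal and no zero column has a nonzero principal minor. Here
`a`, `b`, `c` denote its rows and the index its column; the last four hypotheses are the `2 × 2`
principal minors (up to sign) and the determinant. -/
lemma no_vanishing_principal_minors {b₁ c₁ a₂ c₂ a₃ b₃ : ℝ}
    (h₁ : b₁ ≠ 0 ∨ c₁ ≠ 0) (h₂ : a₂ ≠ 0 ∨ c₂ ≠ 0) (h₃ : a₃ ≠ 0 ∨ b₃ ≠ 0)
    (h₁₂ : b₁ * a₂ = 0) (h₂₃ : c₂ * b₃ = 0) (h₁₃ : c₁ * a₃ = 0)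
    (h : b₁ * c₂ * a₃ + c₁ * a₂ * b₃ = 0) : False := by
  grind [mul_eq_zero]

/-- If `w¹, w², w³` are linearly independent and `v¹, v², v³` are nonzero, then the
seven determinants obtained by replacing columns cannot all vanish. -/
theorem stmt_8 (w₁ w₂ w₃ v₁ v₂ v₃ : Fin 3 → ℝ)
    (hw : LinearIndependent ℝ ![w₁, w₂, w₃])
    (hv₁ : v₁ ≠ 0) (hv₂ : v₂ ≠ 0) (hv₃ : v₃ ≠ 0) :
    ¬ (det3 v₁ w₂ w₃ = 0 ∧ det3 w₁ v₂ w₃ = 0 ∧ det3 w₁ w₂ v₃ = 0 ∧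
       det3 v₁ v₂ w₃ = 0 ∧ det3 w₁ v₂ v₃ = 0 ∧ det3 v₁ w₂ v₃ = 0 ∧
       det3 v₁ v₂ v₃ = 0) := by
  rintro ⟨h1, h2, h3, h12, h23, h13, h123⟩
  have hD := det3_ne_zero hw
  obtain ⟨a₁, b₁, c₁, rfl⟩ := exists_coeffs hw v₁
  obtain ⟨a₂, b₂, c₂, rfl⟩ := exists_coeffs hw v₂
  obtain ⟨a₃, b₃, c₃, rfl⟩ := exists_coeffs hw v₃
  have cancel : ∀ {x y : ℝ}, y = 0 → y = x * det3 w₁ w₂ w₃ → x = 0 := fun hy h =>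
    (mul_eq_zero.mp (h.symm.trans hy)).resolve_right hD
  obtain rfl : a₁ = 0 := cancel h1 (by simp [det3_eq]; ring)
  obtain rfl : b₂ = 0 := cancel h2 (by simp [det3_eq]; ring)
  obtain rfl : c₃ = 0 := cancel h3 (by simp [det3_eq]; ring)
  refine no_vanishing_principal_minors (b₁ := b₁) (c₁ := c₁) (a₂ := a₂) (c₂ := c₂) (a₃ := a₃) (b₃ := b₃)
    ?_ ?_ ?_ ?_ ?_ ?_ (cancel h123 (by simp [det3_eq]; ring))
  · by_contra! h
    simp [h] at hv₁
  · by_contra! h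
    simp [h] at hv₂
  · by_contra! h
    simp [h] at hv₃
  · exact neg_eq_zero.mp (cancel h12 (by simp [det3_eq]; ring))
  · exact neg_eq_zero.mp (cancel h23 (by simp [det3_eq]; ring))
  · exact neg_eq_zero.mp (cancel h13 (by simp [det3_eq]; ring))
end

section
/- Let w¹, w², w³, v¹, v², v³ ∈ ℝ³ be fixed vectors and define g : ℝ³ → ℝ by g(λ, μ, ν) = det(w¹ + λv¹, w² + μv², w³ + νv³). Then g has a local extremum (local minimum or local maximum) at (0, 0, 0) if and only if g is a constant function. -/
open Topology in
lemma coeffs_eq_zero (a b c d e f h : ℝ)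
    (H : ∀ᶠ p : ℝ × ℝ × ℝ in 𝓝 (0, 0, 0),
      0 ≤ a * p.1 + b * p.2.1 + c * p.2.2 + d * (p.2.1 * p.2.2) + e * (p.1 * p.2.2)
        + f * (p.1 * p.2.1) + h * (p.1 * p.2.1 * p.2.2)) :
    a = 0 ∧ b = 0 ∧ c = 0 ∧ d = 0 ∧ e = 0 ∧ f = 0 ∧ h = 0 := by
  obtain ⟨ε, hε, H⟩ := Metric.eventually_nhds_iff.mp H
  have K : ∀ x y z : ℝ, |x| < ε → |y| < ε → |z| < ε →
      0 ≤ a * x + b * y + c * z + d * (y * z) + e * (x * z) + f * (x * y) + h * (x * y * z) := by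
    intro x y z hx hy hz
    refine H (y := (x, y, z)) ?_
    simp [Prod.dist_eq, hx, hy, hz]
  clear H
  obtain ⟨t, ht, htε⟩ := exists_between hε
  have h0 : |(0 : ℝ)| < ε := by simpa using hε
  have hp : |t| < ε := by rwa [abs_of_pos ht]
  have hm : |-t| < ε := by rwa [abs_neg]
  have key : ∀ u s : ℝ, 0 < s → 0 ≤ u * s → 0 ≤ -(u * s) → u = 0 := by
    intro u s hs h1 h2
    have h3 : u * s = 0 := by linarith
    exact (mul_eq_zero.mp h3).resolve_right hs.ne'
  have ha : a = 0 := key a t ht (by linarith [K t 0 0 hp h0 h0]) (by linarith [K (-t) 0 0 hm h0 h0])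
  have hb : b = 0 := key b t ht (by linarith [K 0 t 0 h0 hp h0]) (by linarith [K 0 (-t) 0 h0 hm h0])
  have hc : c = 0 := key c t ht (by linarith [K 0 0 t h0 h0 hp]) (by linarith [K 0 0 (-t) h0 h0 hm])
  subst ha hb hc
  have hd : d = 0 := key d (t * t) (by positivity)
    (by linarith [K 0 t t h0 hp hp]) (by linarith [K 0 (-t) t h0 hm hp])
  have he : e = 0 := key e (t * t) (by positivity)
    (by linarith [K t 0 t hp h0 hp]) (by linarith [K (-t) 0 t hm h0 hp])
  have hf : f = 0 := key f (t * t) (by positivity)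
    (by linarith [K t t 0 hp hp h0]) (by linarith [K (-t) t 0 hm hp h0])
  subst hd he hf
  have hh : h = 0 := key h (t * t * t) (by positivity)
    (by linarith [K t t t hp hp hp]) (by linarith [K (-t) t t hm hp hp])
  exact ⟨rfl, rfl, rfl, rfl, rfl, rfl, hh⟩

lemma det3_expand (w₁ w₂ w₃ v₁ v₂ v₃ : Fin 3 → ℝ) (x y z : ℝ) :
    det3 (w₁ + x • v₁) (w₂ + y • v₂) (w₃ + z • v₃) =
      det3 w₁ w₂ w₃ + (det3 v₁ w₂ w₃ * x + det3 w₁ v₂ w₃ * y + det3 w₁ w₂ v₃ * z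
        + det3 w₁ v₂ v₃ * (y * z) + det3 v₁ w₂ v₃ * (x * z) + det3 v₁ v₂ w₃ * (x * y)
        + det3 v₁ v₂ v₃ * (x * y * z)) := by
  simp only [det3, Matrix.det_fin_three, Matrix.transpose_apply, Matrix.of_apply,
    Matrix.cons_val, Pi.add_apply, Pi.smul_apply, smul_eq_mul]
  ring

/-- The function `g(λ, μ, ν) = det(w¹ + λv¹, w² + μv², w³ + νv³)` has a local
extremum at `(0,0,0)` if and only if it is constant. -/
theorem stmt_9 (w₁ w₂ w₃ v₁ v₂ v₃ : Fin 3 → ℝ)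
    (g : ℝ × ℝ × ℝ → ℝ)
    (hg : g = fun p => det3 (w₁ + p.1 • v₁) (w₂ + p.2.1 • v₂) (w₃ + p.2.2 • v₃)) :
    (IsLocalMin g (0, 0, 0) ∨ IsLocalMax g (0, 0, 0)) ↔ ∀ p q, g p = g q := by
  simp only [det3_expand] at hg
  constructor
  · intro hext
    have hz : det3 v₁ w₂ w₃ = 0 ∧ det3 w₁ v₂ w₃ = 0 ∧ det3 w₁ w₂ v₃ = 0 ∧ det3 w₁ v₂ v₃ = 0 ∧
        det3 v₁ w₂ v₃ = 0 ∧ det3 v₁ v₂ w₃ = 0 ∧ det3 v₁ v₂ v₃ = 0 := by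
      rcases hext with hmin | hmax
      · apply coeffs_eq_zero
        filter_upwards [hmin] with p hp
        simp only [hg] at hp
        linarith
      · have hneg := coeffs_eq_zero (-det3 v₁ w₂ w₃) (-det3 w₁ v₂ w₃) (-det3 w₁ w₂ v₃)
          (-det3 w₁ v₂ v₃) (-det3 v₁ w₂ v₃) (-det3 v₁ v₂ w₃) (-det3 v₁ v₂ v₃) (by
            filter_upwards [hmax] with p hp
            simp only [hg] at hp
            linarith)
        simpa only [neg_eq_zero] using hneg
    obtain ⟨h1, h2, h3, h4, h5, h6, h7⟩ := hz
    intro p q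
    simp only [hg, h1, h2, h3, h4, h5, h6, h7, zero_mul]
  · intro hconst
    exact Or.inl (Filter.Eventually.of_forall fun p => (hconst _ p).le)
end

section
/- Let 𝔭 ∈ ℝ[x, y, z] be a polynomial of total degree at most 3 and let V(∇𝔭) = {(x,y,z) ∈ ℝ³ : ∇𝔭(x,y,z) = 0} be the zero set of its gradient. Let m ∈ V(∇𝔭) be a local extremum of the polynomial function 𝔭 : ℝ³ → ℝ, and let C ⊆ V(∇𝔭) be a path-connected component of V(∇𝔭) containing m. Then the affine hull of C is contained in V(∇𝔭). -/
/-!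
Translate `m` to the origin and, replacing `p` by `-p` if necessary, let `m` be a local minimum.
Taylor expansion of the cubic `p` at its critical point `m` reads
`p (m + x) = p m + Q x x / 2 + T x x x / 6` with `Q` a symmetric bilinear and `T` a symmetric
trilinear form, and the derivative of `p` at `m + x` in direction `v` is `Q x v + T x x v / 2`.

Minimality along lines makes `Q` positive semidefinite. Let `K` be its kernel and `k ∈ K`.
Minimality along the line `t • k` gives `T k k k = 0`, and along the parabolas `t • k + t² • w` it
gives `Q w w + T k k w ≥ 0` for all `w`, hence `T k k w = 0` for all `w`
(`Jet.cubic_eq_zero_of_mem_ker`). So `m + K` consists of critical points.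

Let `m + k + u` be a critical point, with `k ∈ K` and `u` in a fixed complement `U` of `K`. Pairing
the gradient with `k` gives `T u u k = 0`, and pairing it with `u` then gives
`Q u u + T u u u / 2 = 0`. As `Q` is positive definite on `U`, either `u = 0` or `‖u‖` is bounded
below by a positive constant. On a connected set of critical points containing `m` the function `‖u‖`
has connected range containing `0`, so `u = 0` throughout: the set lies in the affine space `m + K`,
and so does its affine hull.
-/

open MvPolynomial

/-! ### Directional derivatives and Taylor expansion of polynomials -/

/-- The directional derivative `∑ i, v i • ∂p/∂xᵢ` of a polynomial, as a map linear in both the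
direction and the polynomial. -/
noncomputable def dirDeriv :
    (Fin 3 → ℝ) →ₗ[ℝ] MvPolynomial (Fin 3) ℝ →ₗ[ℝ] MvPolynomial (Fin 3) ℝ :=
  LinearMap.mk₂ ℝ (fun v p => ∑ i, v i • pderiv i p)
    (by intro u v p; simp [add_smul, Finset.sum_add_distrib])
    (by intro c v p; simp [mul_smul, Finset.smul_sum])
    (by intro v p q; simp [Finset.sum_add_distrib])
    (by intro c v p; simp [Finset.smul_sum, smul_comm c])

theorem dirDeriv_apply (v : Fin 3 → ℝ) (p : MvPolynomial (Fin 3) ℝ) :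
    dirDeriv v p = ∑ i, v i • pderiv i p := rfl

theorem pderiv_pderiv_comm (i j : Fin 3) (p : MvPolynomial (Fin 3) ℝ) :
    pderiv i (pderiv j p) = pderiv j (pderiv i p) := by
  -- The commutator of two derivations is a derivation, and it kills the variables.
  have h : ⁅(pderiv i : Derivation ℝ (MvPolynomial (Fin 3) ℝ) (MvPolynomial (Fin 3) ℝ)),
      (pderiv j : Derivation ℝ (MvPolynomial (Fin 3) ℝ) (MvPolynomial (Fin 3) ℝ))⁆ = 0 := by
    apply MvPolynomial.derivation_ext
    intro k
    rw [Derivation.commutator_apply]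
    simp only [pderiv_X, Pi.single_apply]
    split_ifs <;> simp
  have h2 := congrArg (fun D => D p) h
  simp only [Derivation.commutator_apply, Derivation.zero_apply] at h2
  exact sub_eq_zero.mp h2

theorem dirDeriv_comm (u v : Fin 3 → ℝ) (p : MvPolynomial (Fin 3) ℝ) :
    dirDeriv u (dirDeriv v p) = dirDeriv v (dirDeriv u p) := by
  simp only [dirDeriv_apply, map_sum, Derivation.map_smul]
  rw [Finset.sum_comm]
  refine Finset.sum_congr rfl fun i _ => Finset.sum_congr rfl fun j _ => ?_
  rw [pderiv_pderiv_comm, smul_comm]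

theorem totalDegree_pderiv_le (i : Fin 3) (p : MvPolynomial (Fin 3) ℝ) :
    (pderiv i p).totalDegree ≤ p.totalDegree - 1 := by
  conv_lhs => rw [p.as_sum, map_sum]
  refine totalDegree_finsetSum_le fun s hs => ?_
  rw [pderiv_monomial]
  by_cases hsi : s i = 0
  · simp [hsi]
  · refine (totalDegree_monomial_le _ _).trans ?_
    have hle : Finsupp.single i 1 ≤ s := by
      rw [Finsupp.single_le_iff]; omega
    have h1 : (s.sum fun _ e => e) ≤ p.totalDegree := le_totalDegree hs
    have h2 : ((s - Finsupp.single i 1 + Finsupp.single i 1).sum fun _ e => e) =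
        ((s - Finsupp.single i 1).sum fun _ e => e) + 1 := by
      rw [Finsupp.sum_add_index' (by simp) (by simp)]
      simp
    rw [tsub_add_cancel_of_le hle] at h2
    change ((s - Finsupp.single i 1).sum fun _ e => e) ≤ _
    omega

theorem totalDegree_dirDeriv_le (v : Fin 3 → ℝ) {p : MvPolynomial (Fin 3) ℝ} {n : ℕ}
    (hp : p.totalDegree ≤ n + 1) : (dirDeriv v p).totalDegree ≤ n := by
  rw [dirDeriv_apply]
  refine totalDegree_finsetSum_le fun i _ => (totalDegree_smul_le _ _).trans ?_
  have := totalDegree_pderiv_le i p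
  omega

theorem hasDerivAt_eval_line (a v : Fin 3 → ℝ) (p : MvPolynomial (Fin 3) ℝ) (t : ℝ) :
    HasDerivAt (fun t : ℝ => eval (a + t • v) p) (eval (a + t • v) (dirDeriv v p)) t := by
  induction p using MvPolynomial.induction_on with
  | C r => simpa [dirDeriv_apply] using hasDerivAt_const t r
  | add p q hp hq => simpa using HasDerivAt.fun_add hp hq
  | mul_X p j hp =>
    have hX : HasDerivAt (fun t : ℝ => a j + t * v j) (v j) t := by
      simpa using ((hasDerivAt_id t).mul_const (v j)).const_add (a j)
    have := HasDerivAt.fun_mul hp hX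
    simp only [map_mul, eval_X, Pi.add_apply, Pi.smul_apply, smul_eq_mul]
    refine this.congr_deriv ?_
    simp only [dirDeriv_apply, Fin.sum_univ_three, pderiv_mul, map_add, map_mul, smul_eval, eval_X,
      pderiv_X, Pi.add_apply, Pi.smul_apply, smul_eq_mul]
    fin_cases j <;> simp <;> ring

theorem eq_of_hasDerivAt_eq {f g h : ℝ → ℝ} (hf : ∀ t, HasDerivAt f (h t) t)
    (hg : ∀ t, HasDerivAt g (h t) t) (h0 : f 0 = g 0) (t : ℝ) : f t = g t := by
  have hd : ∀ s, HasDerivAt (fun s => f s - g s) 0 s := fun s => by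
    simpa using (hf s).fun_sub (hg s)
  have := is_const_of_deriv_eq_zero (fun s => (hd s).differentiableAt) (fun s => (hd s).deriv) t 0
  linarith

theorem taylor_one (m x : Fin 3 → ℝ) {q : MvPolynomial (Fin 3) ℝ} (hq : q.totalDegree ≤ 1)
    (t : ℝ) : eval (m + t • x) q = eval m q + t * eval m (dirDeriv x q) := by
  refine eq_of_hasDerivAt_eq (f := fun t => eval (m + t • x) q)
    (g := fun t => eval m q + t * eval m (dirDeriv x q)) (hasDerivAt_eval_line m x q) ?_ ?_ t
  · intro s
    have h0 := totalDegree_dirDeriv_le x (n := 0) hq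
    rw [totalDegree_eq_zero_iff_eq_C.mp (Nat.le_zero.mp h0)]
    refine (((hasDerivAt_id s).mul_const _).const_add _).congr_deriv ?_
    simp
  · simp

theorem taylor_two (m x : Fin 3 → ℝ) {q : MvPolynomial (Fin 3) ℝ} (hq : q.totalDegree ≤ 2)
    (t : ℝ) : eval (m + t • x) q = eval m q + t * eval m (dirDeriv x q)
      + t ^ 2 / 2 * eval m (dirDeriv x (dirDeriv x q)) := by
  refine eq_of_hasDerivAt_eq (f := fun t => eval (m + t • x) q)
    (g := fun t => eval m q + t * eval m (dirDeriv x q)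
      + t ^ 2 / 2 * eval m (dirDeriv x (dirDeriv x q))) (hasDerivAt_eval_line m x q) ?_ ?_ t
  · intro s
    rw [taylor_one m x (totalDegree_dirDeriv_le x (n := 1) hq)]
    refine ((((hasDerivAt_id s).mul_const _).const_add _).add
      (((hasDerivAt_pow 2 s).div_const 2).mul_const _)).congr_deriv ?_
    push_cast; ring
  · simp

theorem taylor_three (m x : Fin 3 → ℝ) {q : MvPolynomial (Fin 3) ℝ} (hq : q.totalDegree ≤ 3)
    (t : ℝ) : eval (m + t • x) q = eval m q + t * eval m (dirDeriv x q)
      + t ^ 2 / 2 * eval m (dirDeriv x (dirDeriv x q))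
      + t ^ 3 / 6 * eval m (dirDeriv x (dirDeriv x (dirDeriv x q))) := by
  refine eq_of_hasDerivAt_eq (f := fun t => eval (m + t • x) q)
    (g := fun t => eval m q + t * eval m (dirDeriv x q)
      + t ^ 2 / 2 * eval m (dirDeriv x (dirDeriv x q))
      + t ^ 3 / 6 * eval m (dirDeriv x (dirDeriv x (dirDeriv x q))))
    (hasDerivAt_eval_line m x q) ?_ ?_ t
  · intro s
    rw [taylor_two m x (totalDegree_dirDeriv_le x (n := 2) hq)]
    refine (((((hasDerivAt_id s).mul_const _).const_add _).add
      (((hasDerivAt_pow 2 s).div_const 2).mul_const _)).add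
      (((hasDerivAt_pow 3 s).div_const 6).mul_const _)).congr_deriv ?_
    push_cast; ring
  · simp

/-! ### Forms that are nonnegative near the origin -/

/-- The leading coefficient `g 0` of `t ^ n * g t` inherits nonnegativity for small `t > 0`. -/
theorem nonneg_of_eventually_pow_mul {g : ℝ → ℝ} (hg : Continuous g) (n : ℕ)
    (h : ∀ᶠ t in nhds (0 : ℝ), 0 ≤ t ^ n * g t) : 0 ≤ g 0 := by
  have ht : Filter.Tendsto g (nhdsWithin 0 (Set.Ioi 0)) (nhds (g 0)) :=
    hg.continuousAt.tendsto.mono_left nhdsWithin_le_nhds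
  refine ge_of_tendsto ht ?_
  filter_upwards [h.filter_mono nhdsWithin_le_nhds, self_mem_nhdsWithin] with t h1 h2
  exact nonneg_of_mul_nonneg_right h1 (pow_pos h2 n)

theorem linear_coeff_eq_zero {a b : ℝ} (h : ∀ s : ℝ, 0 ≤ s ^ 2 * a + s * b) : b = 0 := by
  have key : ∀ c : ℝ, (∀ s : ℝ, 0 ≤ s ^ 2 * a + s * c) → 0 ≤ c := fun c hc => by
    have := nonneg_of_eventually_pow_mul (g := fun s => s * a + c) (by fun_prop) 1
      (Filter.Eventually.of_forall fun s => by linarith [hc s])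
    simpa using this
  have h1 := key b h
  have h2 := key (-b) fun s => by linarith [h (-s)]
  linarith

/-- The Taylor data of a cubic polynomial at a local minimum: a symmetric bilinear form `Q` and a
symmetric trilinear form `T` such that `Q x x / 2 + T x x x / 6` has a local minimum at `0`. -/
structure Jet where
  /-- The Hessian. -/
  Q : (Fin 3 → ℝ) →ₗ[ℝ] (Fin 3 → ℝ) →ₗ[ℝ] ℝ
  /-- The form of third derivatives. -/
  T : (Fin 3 → ℝ) →ₗ[ℝ] (Fin 3 → ℝ) →ₗ[ℝ] (Fin 3 → ℝ) →ₗ[ℝ] ℝ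
  Q_symm : ∀ x y, Q x y = Q y x
  T_symm : ∀ x y z, T x y z = T y x z
  T_symm' : ∀ x y z, T x y z = T x z y
  nonneg : ∀ᶠ x in nhds (0 : Fin 3 → ℝ), 0 ≤ Q x x / 2 + T x x x / 6

namespace Jet

variable (J : Jet)

theorem eventually_curve (v w : Fin 3 → ℝ) :
    ∀ᶠ t in nhds (0 : ℝ), 0 ≤ J.Q (t • v + t ^ 2 • w) (t • v + t ^ 2 • w) / 2
      + J.T (t • v + t ^ 2 • w) (t • v + t ^ 2 • w) (t • v + t ^ 2 • w) / 6 := by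
  have hc : Filter.Tendsto (fun t : ℝ => t • v + t ^ 2 • w) (nhds 0) (nhds 0) := by
    have : Continuous (fun t : ℝ => t • v + t ^ 2 • w) := by fun_prop
    simpa using this.tendsto 0
  exact hc.eventually J.nonneg

theorem Q_nonneg (x : Fin 3 → ℝ) : 0 ≤ J.Q x x := by
  have h := nonneg_of_eventually_pow_mul (g := fun t => J.Q x x / 2 + t * (J.T x x x / 6))
    (by fun_prop) 2 (by
      filter_upwards [J.eventually_curve x 0] with t ht
      simp only [smul_zero, add_zero, map_smul, LinearMap.smul_apply, smul_eq_mul] at ht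
      linarith)
  simp only [zero_mul, add_zero] at h
  linarith

theorem mem_ker_of_Q_self_eq_zero {x : Fin 3 → ℝ} (hx : J.Q x x = 0) :
    x ∈ LinearMap.ker J.Q := by
  rw [LinearMap.mem_ker]
  refine LinearMap.ext fun y => ?_
  rw [LinearMap.zero_apply]
  have h : 2 * J.Q x y = 0 := linear_coeff_eq_zero (a := J.Q y y) fun s => by
    have := J.Q_nonneg (x + s • y)
    simp only [map_add, map_smul, LinearMap.add_apply, LinearMap.smul_apply, smul_eq_mul, hx,
      J.Q_symm y x] at this
    linarith
  linarith

theorem cubic_eq_zero_of_mem_ker {v : Fin 3 → ℝ} (hv : v ∈ LinearMap.ker J.Q)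
    (w : Fin 3 → ℝ) : J.T v v w = 0 := by
  have hQ : ∀ y, J.Q v y = 0 := fun y => by rw [LinearMap.mem_ker.mp hv, LinearMap.zero_apply]
  have hQ' : ∀ y, J.Q y v = 0 := fun y => by rw [J.Q_symm, hQ]
  have hnonneg : ∀ y, J.Q y y = 0 → 0 ≤ J.T y y y := fun y hy => by
    have h := nonneg_of_eventually_pow_mul (g := fun _ => J.T y y y / 6)
      continuous_const 3 (by
        filter_upwards [J.eventually_curve y 0] with t ht
        simp only [smul_zero, add_zero, map_smul, LinearMap.smul_apply, smul_eq_mul, hy] at ht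
        linarith)
    linarith
  have hvvv : J.T v v v = 0 := by
    have h1 := hnonneg v (hQ v)
    have h2 := hnonneg (-v) (by simp [hQ])
    simp only [map_neg, LinearMap.neg_apply] at h2
    linarith
  -- On the parabola `t • v + t² • y` the expansion starts at order `t⁴`.
  have hpar : ∀ y, 0 ≤ J.Q y y + J.T v v y := fun y => by
    have s1 : J.T v y v = J.T v v y := J.T_symm' _ _ _
    have s2 : J.T y v v = J.T v v y := by rw [J.T_symm, s1]
    have s3 : J.T y v y = J.T v y y := J.T_symm _ _ _
    have s4 : J.T y y v = J.T v y y := by rw [J.T_symm', s3]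
    have h := nonneg_of_eventually_pow_mul
      (g := fun t => (J.Q y y + J.T v v y) / 2 + t * (J.T v y y / 2) + t ^ 2 * (J.T y y y / 6))
      (by fun_prop) 4 (by
        filter_upwards [J.eventually_curve v y] with t ht
        simp only [map_add, map_smul, LinearMap.add_apply, LinearMap.smul_apply, smul_eq_mul,
          hQ, hQ', hvvv, s1, s2, s3, s4] at ht
        linarith)
    simp only [zero_mul, add_zero, ne_eq, OfNat.ofNat_ne_zero, not_false_eq_true, zero_pow] at h
    linarith
  refine linear_coeff_eq_zero (a := J.Q w w) fun s => ?_
  have := hpar (s • w)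
  simp only [map_smul, LinearMap.smul_apply, smul_eq_mul] at this
  linarith

/-- The critical points of the function `x ↦ Q x x / 2 + T x x x / 6`. -/
def Crit (x : Fin 3 → ℝ) : Prop := ∀ v, J.Q x v + J.T x x v / 2 = 0

theorem crit_of_mem_ker {x : Fin 3 → ℝ} (hx : x ∈ LinearMap.ker J.Q) : J.Crit x := fun v => by
  rw [J.cubic_eq_zero_of_mem_ker hx, LinearMap.mem_ker.mp hx]
  simp

/-- The component transverse to the kernel of a critical point satisfies a scalar equation in which
the kernel component does not appear. -/
theorem crit_transverse {k u : Fin 3 → ℝ} (hk : k ∈ LinearMap.ker J.Q) (h : J.Crit (k + u)) :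
    J.Q u u + J.T u u u / 2 = 0 := by
  have hQ : ∀ y, J.Q k y = 0 := fun y => by rw [LinearMap.mem_ker.mp hk, LinearMap.zero_apply]
  have hT := J.cubic_eq_zero_of_mem_ker hk
  have s1 : J.T k u k = 0 := by rw [J.T_symm', hT]
  have s2 : J.T u k k = 0 := by rw [J.T_symm, s1]
  have s3 : J.T u k u = J.T k u u := J.T_symm _ _ _
  have s4 : J.T u u k = J.T k u u := by rw [J.T_symm', s3]
  have h1 := h k
  have h2 := h u
  simp only [map_add, LinearMap.add_apply, hQ, J.Q_symm u k, hT, s1, s2, s3, s4] at h1 h2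
  linarith

/-- On a complement of the kernel, nonzero solutions of the transverse equation stay away from the
origin. -/
theorem exists_gap {U : Submodule ℝ (Fin 3 → ℝ)} (hU : Disjoint (LinearMap.ker J.Q) U) :
    ∃ δ > 0, ∀ u ∈ U, J.Q u u + J.T u u u / 2 = 0 → u ≠ 0 → δ ≤ ‖u‖ := by
  have hS : IsCompact (Metric.sphere (0 : Fin 3 → ℝ) 1 ∩ U) :=
    (isCompact_sphere 0 1).inter_right U.closed_of_finiteDimensional
  have hexp : ∀ (f : (Fin 3 → ℝ) →ₗ[ℝ] ℝ) x, f x = ∑ k, x k * f (Pi.single k 1) := fun f x => by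
    have hx : x = ∑ k, x k • (Pi.single k 1 : Fin 3 → ℝ) := by
      ext j; simp [Finset.sum_apply, Pi.single_apply]
    conv_lhs => rw [hx]
    simp [map_sum]
  have hcont : ∀ B : (Fin 3 → ℝ) →ₗ[ℝ] (Fin 3 → ℝ) →ₗ[ℝ] ℝ, Continuous fun x => B x x := fun B => by
    have h : ∀ x, B x x = ∑ j, x j * B (Pi.single j 1) x := fun x => hexp (B.flip x) x
    have hlin : ∀ j, Continuous (B (Pi.single j 1)) :=
      fun j => LinearMap.continuous_of_finiteDimensional _
    simp only [h]
    fun_prop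
  have hcQ := hcont J.Q
  have hcT : Continuous fun x => J.T x x x := by
    have h : ∀ x, J.T x x x = ∑ j, x j * J.T (Pi.single j 1) x x :=
      fun x => hexp ((J.T.flip x).flip x) x
    have hbil := fun j => hcont (J.T (Pi.single j 1))
    simp only [h]
    fun_prop
  obtain ⟨c, hc, hcle⟩ := hS.exists_forall_le' (a := 0) hcQ.continuousOn (fun u hu => by
    refine lt_of_le_of_ne (J.Q_nonneg u) fun h0 => ?_
    have hz : u = 0 :=
      Submodule.disjoint_def.mp hU u (J.mem_ker_of_Q_self_eq_zero h0.symm) hu.2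
    have h1 : ‖u‖ = 1 := by simpa using hu.1
    simp [hz] at h1)
  obtain ⟨M, hM⟩ := hS.exists_bound_of_continuousOn hcT.continuousOn
  refine ⟨2 * c / (|M| + 1), by positivity, fun u hu heq hne => ?_⟩
  have hn : 0 < ‖u‖ := norm_pos_iff.mpr hne
  set s : Fin 3 → ℝ := ‖u‖⁻¹ • u with hs
  have hus : u = ‖u‖ • s := by rw [hs, smul_smul, mul_inv_cancel₀ hn.ne', one_smul]
  have hsS : s ∈ Metric.sphere (0 : Fin 3 → ℝ) 1 ∩ U := by
    refine ⟨?_, U.smul_mem _ hu⟩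
    simp [hs, norm_smul, hn.ne']
  have h1 := hcle s hsS
  have h2 := (abs_le.mp (Real.norm_eq_abs _ ▸ hM s hsS)).1
  have h3 : J.Q s s + ‖u‖ * J.T s s s / 2 = 0 := by
    have h4 : ‖u‖ ^ 2 * (J.Q s s + ‖u‖ * J.T s s s / 2) = 0 := by
      rw [hus] at heq
      simp only [map_smul, LinearMap.smul_apply, smul_eq_mul] at heq
      linarith
    exact (mul_eq_zero.mp h4).resolve_left (by positivity)
  rw [div_le_iff₀ (by positivity)]
  nlinarith [le_abs_self M, mul_le_mul_of_nonneg_left h2 hn.le,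
    mul_le_mul_of_nonneg_left (le_abs_self M) hn.le]

theorem subset_ker_of_isPreconnected {S : Set (Fin 3 → ℝ)} (hS : IsPreconnected S)
    (h0 : 0 ∈ S) (hcrit : ∀ x ∈ S, J.Crit x) : S ⊆ LinearMap.ker J.Q := by
  obtain ⟨U, hU⟩ := (LinearMap.ker J.Q).exists_isCompl
  obtain ⟨δ, hδ, hgap⟩ := J.exists_gap hU.disjoint
  set π := U.projection _ hU.symm with hπ
  have hker : ∀ x, x - π x ∈ LinearMap.ker J.Q := fun x => by
    rw [← Submodule.projection_eq_self_sub_projection hU.symm x]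
    exact Submodule.projection_apply_mem _ x
  have hmem : ∀ x, π x ∈ U := fun x => Submodule.projection_apply_mem _ x
  have hcont : Continuous fun x => ‖π x‖ := π.continuous_of_finiteDimensional.norm
  have hdich : ∀ x ∈ S, π x = 0 ∨ δ ≤ ‖π x‖ := fun x hx => by
    rw [or_iff_not_imp_left]
    refine hgap _ (hmem x) (J.crit_transverse (hker x) ?_)
    rw [sub_add_cancel]
    exact hcrit x hx
  intro x hx
  rcases hdich x hx with h | h
  · simpa [h] using hker x
  · -- The connected range of `‖π ·‖` on `S` contains `0` and a value `≥ δ`, hence `δ / 2`.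
    have himg := (hS.image _ hcont.continuousOn).ordConnected
    have hzero : (0 : ℝ) ∈ (fun x => ‖π x‖) '' S := ⟨0, h0, by simp⟩
    have : δ / 2 ∈ (fun x => ‖π x‖) '' S :=
      himg.out hzero ⟨x, hx, rfl⟩ ⟨by positivity, by dsimp only; linarith⟩
    obtain ⟨y, hy, hyδ⟩ := this
    dsimp only at hyδ
    rcases hdich y hy with h' | h'
    · rw [h', norm_zero] at hyδ; linarith
    · linarith

end Jet

/-! ### Application to polynomials -/

theorem forall_pderiv_eq_zero_iff (p : MvPolynomial (Fin 3) ℝ) (x : Fin 3 → ℝ) :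
    (∀ i, eval x (pderiv i p) = 0) ↔ ∀ v, eval x (dirDeriv v p) = 0 := by
  constructor
  · intro h v
    simp [dirDeriv_apply, map_sum, smul_eval, h]
  · intro h i
    simpa [dirDeriv_apply, map_sum, smul_eval, Pi.single_apply, ite_smul, apply_ite] using
      h (Pi.single i 1)

/-- The Hessian form of `q` at `m`. -/
noncomputable def hessian (m : Fin 3 → ℝ) :
    MvPolynomial (Fin 3) ℝ →ₗ[ℝ] (Fin 3 → ℝ) →ₗ[ℝ] (Fin 3 → ℝ) →ₗ[ℝ] ℝ where
  toFun q := LinearMap.mk₂ ℝ (fun u v => eval m (dirDeriv u (dirDeriv v q)))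
    (by intros; simp) (by intros; simp [smul_eval]) (by intros; simp)
    (by intros; simp [smul_eval])
  map_add' p q := by ext; simp
  map_smul' c q := by ext; simp [smul_eval]

theorem hessian_apply (m : Fin 3 → ℝ) (q : MvPolynomial (Fin 3) ℝ) (u v : Fin 3 → ℝ) :
    hessian m q u v = eval m (dirDeriv u (dirDeriv v q)) := rfl

/-- The jet of a cubic polynomial at a critical point which is a local minimum. -/
noncomputable def jetAt (p : MvPolynomial (Fin 3) ℝ) (hdeg : p.totalDegree ≤ 3) (m : Fin 3 → ℝ)
    (hcrit : ∀ v, eval m (dirDeriv v p) = 0) (hmin : IsLocalMin (fun x => eval x p) m) : Jet where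
  Q := hessian m p
  T := (hessian m).comp (dirDeriv.flip p)
  Q_symm u v := by rw [hessian_apply, hessian_apply, dirDeriv_comm]
  T_symm u v w := by
    simp only [LinearMap.comp_apply, LinearMap.flip_apply, hessian_apply]
    rw [dirDeriv_comm w u, dirDeriv_comm w v, dirDeriv_comm v u]
  T_symm' u v w := by
    simp only [LinearMap.comp_apply, LinearMap.flip_apply, hessian_apply]
    rw [dirDeriv_comm v w]
  nonneg := by
    have hc : Filter.Tendsto (fun x : Fin 3 → ℝ => m + x) (nhds 0) (nhds m) := by
      have : Continuous (fun x : Fin 3 → ℝ => m + x) := by fun_prop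
      simpa using this.tendsto 0
    filter_upwards [hc.eventually hmin] with x hx
    have h := taylor_three m x hdeg 1
    rw [one_smul, hcrit x] at h
    simp only [LinearMap.comp_apply, LinearMap.flip_apply, hessian_apply]
    linarith

theorem jetAt_crit_iff (p : MvPolynomial (Fin 3) ℝ) (hdeg : p.totalDegree ≤ 3) (m : Fin 3 → ℝ)
    (hcrit : ∀ v, eval m (dirDeriv v p) = 0) (hmin : IsLocalMin (fun x => eval x p) m)
    (x : Fin 3 → ℝ) :
    (jetAt p hdeg m hcrit hmin).Crit x ↔ ∀ i, eval (m + x) (pderiv i p) = 0 := by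
  rw [forall_pderiv_eq_zero_iff]
  refine forall_congr' fun v => ?_
  have h := taylor_two m x (totalDegree_dirDeriv_le v (n := 2) hdeg) 1
  rw [one_smul, hcrit v] at h
  have hT : (jetAt p hdeg m hcrit hmin).T x x v
      = eval m (dirDeriv x (dirDeriv x (dirDeriv v p))) := by
    change eval m (dirDeriv x (dirDeriv v (dirDeriv x p))) = _
    rw [dirDeriv_comm v x]
  have hQ : (jetAt p hdeg m hcrit hmin).Q x v = eval m (dirDeriv x (dirDeriv v p)) := rfl
  rw [hT, hQ, h]
  constructor <;> intro h' <;> linarith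

theorem affineSpan_subset_of_isLocalMin (p : MvPolynomial (Fin 3) ℝ) (hdeg : p.totalDegree ≤ 3)
    (m : Fin 3 → ℝ) (hmin : IsLocalMin (fun x => eval x p) m) (C : Set (Fin 3 → ℝ))
    (hC : ∀ x ∈ C, ∀ i, eval x (pderiv i p) = 0) (hmC : m ∈ C) (hconn : IsPreconnected C)
    (x : Fin 3 → ℝ) (hx : x ∈ affineSpan ℝ C) (i : Fin 3) : eval x (pderiv i p) = 0 := by
  have hcrit := (forall_pderiv_eq_zero_iff p m).mp (hC m hmC)
  set J := jetAt p hdeg m hcrit hmin with hJ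
  have hsub : (fun y => y - m) '' C ⊆ LinearMap.ker J.Q := by
    refine J.subset_ker_of_isPreconnected (hconn.image _ (by fun_prop)) ⟨m, hmC, sub_self m⟩ ?_
    rintro _ ⟨y, hy, rfl⟩
    rw [hJ, jetAt_crit_iff, add_sub_cancel]
    exact hC y hy
  have hle : affineSpan ℝ C ≤ AffineSubspace.mk' m (LinearMap.ker J.Q) :=
    affineSpan_le.mpr fun y hy => AffineSubspace.mem_mk'.mpr (hsub ⟨y, hy, rfl⟩)
  have hxK : x - m ∈ LinearMap.ker J.Q := AffineSubspace.mem_mk'.mp (hle hx)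
  have h := J.crit_of_mem_ker hxK
  rw [hJ, jetAt_crit_iff, add_sub_cancel] at h
  exact h i

/-- Lemma 4.2 of Betke–Henk: if `m` is a local extremum of a polynomial `𝔭` of total
degree at most `3` and `C` is a path-connected component of `V(∇𝔭)` containing `m`,
then the affine hull of `C` is contained in `V(∇𝔭)`. -/
theorem stmt_10 (p : MvPolynomial (Fin 3) ℝ) (hdeg : p.totalDegree ≤ 3)
    (V : Set (Fin 3 → ℝ))
    (hV : V = {x | ∀ i : Fin 3, eval x (pderiv i p) = 0})
    (m : Fin 3 → ℝ)
    (hext : IsLocalMin (fun x => eval x p) m ∨ IsLocalMax (fun x => eval x p) m)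
    (C : Set (Fin 3 → ℝ)) (hCV : C ⊆ V) (hmC : m ∈ C)
    (hCpc : IsPathConnected C)
    (hCmax : ∀ C', C ⊆ C' → C' ⊆ V → IsPathConnected C' → C' = C) :
    (affineSpan ℝ C : Set (Fin 3 → ℝ)) ⊆ V := by
  subst hV
  have hconn := hCpc.isConnected.isPreconnected
  intro x hx i
  rcases hext with hmin | hmax
  · exact affineSpan_subset_of_isLocalMin p hdeg m hmin C hCV hmC hconn x hx i
  · have h := affineSpan_subset_of_isLocalMin (-p) (by rwa [totalDegree_neg]) m
      (by simpa using hmax.neg) C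
      (fun y hy j => by simpa using hCV hy j) hmC hconn x hx i
    simpa using h
end
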